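/- arXiv:1501.07323 — 3 statements merged into one kernel-verified Lean document; each statement's English description precedes it below -/
import Mathlib

section
/- Let 1 ≤ k ≤ n, m ≥ k, and η ∈ [0,1]. With the random pre-code matrix G_pre (systematic (n,k,η) LDPC generator) and the random m×n LT matrix G_LT (i.i.d. LT rows with degree distribution Ω, independent of G_pre), the probability that the m×k product matrix G_LT·G_pre over GF(2) has rank k is at least 1 − ∑_{i=1}^{k} C(k,i) ∑_{r=i}^{n−k+i} (J(r))^m · D(i,r). -/
open Finset

noncomputable section

/-- Probability of a particular realization of a matrix with i.i.d. Bernoulli(η) entries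
(each entry equals `1` with probability `η`). -/
def preProb (η : ℝ) {l i : ℕ} (P : Matrix (Fin l) (Fin i) (ZMod 2)) : ℝ :=
  ∏ a : Fin l, ∏ b : Fin i, if P a b = 1 then η else 1 - η

/-- Probability of a particular LT row under degree distribution Ω: a degree
`d ∈ {1,...,n}` is drawn with probability `Ω d`, then the row is uniform among the
`C(n,d)` vectors of Hamming weight `d`. -/
def ltRowProb (n : ℕ) (Ω : ℕ → ℝ) (g : Fin n → ZMod 2) : ℝ :=
  if hammingNorm g = 0 then 0 else Ω (hammingNorm g) / (n.choose (hammingNorm g) : ℝ)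

/-- Probability of a particular LT matrix (i.i.d. LT rows). -/
def ltProb (n : ℕ) (Ω : ℕ → ℝ) {m : ℕ} (G : Matrix (Fin m) (Fin n) (ZMod 2)) : ℝ :=
  ∏ i : Fin m, ltRowProb n Ω (G i)

/-- The systematic pre-code generator matrix `[I_k ; P]` (identity on top of `P`). -/
def Gpre {n k : ℕ} (hkn : k ≤ n) (P : Matrix (Fin (n - k)) (Fin k) (ZMod 2)) :
    Matrix (Fin n) (Fin k) (ZMod 2) :=
  Matrix.of fun a b =>
    if ha : (a : ℕ) < k then (if (a : ℕ) = (b : ℕ) then 1 else 0)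
    else P ⟨(a : ℕ) - k, by have := a.isLt; omega⟩ b

/-- `J(r) = ∑_{d=1}^{n} Ω_d (∑_{s even, 0 ≤ s ≤ d} C(r,s) C(n−r,d−s)) / C(n,d)`. -/
def J (n : ℕ) (Ω : ℕ → ℝ) (r : ℕ) : ℝ :=
  ∑ d ∈ Finset.Icc 1 n, Ω d *
    (∑ s ∈ (Finset.range (d + 1)).filter (fun s => Even s),
        (r.choose s : ℝ) * ((n - r).choose (d - s) : ℝ)) / (n.choose d : ℝ)

/-- `D(i,r) = C(n−k, r−i) ((1+(1−2η)^i)/2)^{n−k−(r−i)} ((1−(1−2η)^i)/2)^{r−i}`. -/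
def D (n k : ℕ) (η : ℝ) (i r : ℕ) : ℝ :=
  ((n - k).choose (r - i) : ℝ) * ((1 + (1 - 2 * η) ^ i) / 2) ^ (n - k - (r - i)) *
    ((1 - (1 - 2 * η) ^ i) / 2) ^ (r - i)

lemma aux_prod_sum {ι : Type*} [Fintype ι] [DecidableEq ι] {κ : Type*} [Fintype κ]
    (f : ι → κ → ℝ) : ∑ p : ι → κ, ∏ i, f i (p i) = ∏ i, ∑ j, f i j := by
  rw [Finset.prod_univ_sum, Fintype.piFinset_univ]

/-- Binary vectors and subsets. -/
def suppEquiv (n : ℕ) : (Fin n → ZMod 2) ≃ Finset (Fin n) where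
  toFun g := univ.filter fun a => g a ≠ 0
  invFun S := fun a => if a ∈ S then 1 else 0
  left_inv g := by
    funext a
    have : ∀ u : ZMod 2, (if u ≠ 0 then (1 : ZMod 2) else 0) = u := by decide
    simpa using this (g a)
  right_inv S := by
    ext a
    simp

lemma hammingNorm_supp {n : ℕ} (g : Fin n → ZMod 2) :
    hammingNorm g = (suppEquiv n g).card := rfl

lemma sum_weight (n : ℕ) (f : ℕ → ℝ) :
    ∑ x : Fin n → ZMod 2, f (hammingNorm x) = ∑ i ∈ range (n + 1), (n.choose i : ℝ) * f i := by
  have h := Equiv.sum_comp (suppEquiv n) (fun S => f S.card)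
  have h2 := Finset.sum_powerset_apply_card (x := (univ : Finset (Fin n))) f
  simp only [hammingNorm_supp]
  rw [h]
  simpa using h2

/-- Sign character. -/
def chi (u : ZMod 2) : ℝ := if u = 0 then 1 else -1

lemma chi_add (u v : ZMod 2) : chi (u + v) = chi u * chi v := by
  have h : ∀ u v : ZMod 2, (u + v = 0 ↔ (u = 0 ↔ v = 0)) := by decide
  unfold chi
  by_cases hu : u = 0 <;> by_cases hv : v = 0 <;> simp [h, hu, hv]

lemma chi_sum {ι : Type*} (s : Finset ι) (f : ι → ZMod 2) :
    chi (∑ i ∈ s, f i) = ∏ i ∈ s, chi (f i) := by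
  classical
  induction s using Finset.induction_on with
  | empty => simp [chi]
  | insert a s ha ih => rw [sum_insert ha, prod_insert ha, chi_add, ih]

lemma ind_eq (u c : ZMod 2) : (if u = c then (1 : ℝ) else 0) = (1 + chi c * chi u) / 2 := by
  have h : ∀ u v : ZMod 2, (u = v ↔ (u = 0 ↔ v = 0)) := by decide
  unfold chi
  by_cases hu : u = 0 <;> by_cases hv : c = 0 <;> simp [h u c, hu, hv, eq_comm (a := (0 : ZMod 2))]

lemma sum_zmod2 (f : ZMod 2 → ℝ) : ∑ v, f v = f 0 + f 1 := Fin.sum_univ_two f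

lemma bern_total (η : ℝ) (k : ℕ) :
    ∑ g : Fin k → ZMod 2, ∏ b, (if g b = 1 then η else 1 - η) = 1 := by
  rw [aux_prod_sum (fun (_ : Fin k) (v : ZMod 2) => if v = 1 then η else 1 - η)]
  simp [sum_zmod2]

lemma bern_chi (η : ℝ) (k : ℕ) (x : Fin k → ZMod 2) :
    ∑ g : Fin k → ZMod 2, (∏ b, (if g b = 1 then η else 1 - η)) * chi (∑ b, g b * x b)
      = (1 - 2 * η) ^ hammingNorm x := by
  simp only [chi_sum, ← prod_mul_distrib]
  rw [aux_prod_sum (fun (b : Fin k) (v : ZMod 2) => (if v = 1 then η else 1 - η) * chi (v * x b))]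
  have : ∀ b, ∑ v : ZMod 2, (if v = 1 then η else 1 - η) * chi (v * x b)
      = if x b ≠ 0 then 1 - 2 * η else 1 := by
    intro b
    rw [sum_zmod2]
    by_cases h : x b = 0 <;> simp [chi, h] <;> ring
  simp only [this]
  rw [prod_ite, prod_const, prod_const_one, mul_one]
  rfl

lemma bern_ind (η : ℝ) (k : ℕ) (x : Fin k → ZMod 2) (c : ZMod 2) :
    ∑ g : Fin k → ZMod 2, (∏ b, (if g b = 1 then η else 1 - η)) *
        (if (∑ b, g b * x b) = c then (1 : ℝ) else 0)
      = if c ≠ 0 then (1 - (1 - 2 * η) ^ hammingNorm x) / 2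
          else (1 + (1 - 2 * η) ^ hammingNorm x) / 2 := by
  simp only [ind_eq]
  have : ∀ g : Fin k → ZMod 2, (∏ b, (if g b = 1 then η else 1 - η)) *
      ((1 + chi c * chi (∑ b, g b * x b)) / 2)
      = (1 / 2) * (∏ b, (if g b = 1 then η else 1 - η)) + (chi c / 2) *
        ((∏ b, (if g b = 1 then η else 1 - η)) * chi (∑ b, g b * x b)) := by
    intro g; ring
  simp only [this]
  rw [sum_add_distrib, ← mul_sum, ← mul_sum, bern_total, bern_chi]
  by_cases h : c = 0 <;> simp [chi, h] <;> ring

lemma prod_weight {l : ℕ} (z : Fin l → ZMod 2) (q p : ℝ) :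
    ∏ a, (if z a ≠ 0 then q else p) = p ^ (l - hammingNorm z) * q ^ hammingNorm z := by
  rw [prod_ite, prod_const, prod_const, mul_comm]
  have h := Finset.card_filter_add_card_filter_not (s := (univ : Finset (Fin l))) (fun a => z a ≠ 0)
  have h1 : hammingNorm z = #{a | z a ≠ 0} := rfl
  have h2 : #{a | ¬ z a ≠ 0} = l - hammingNorm z := by
    simp only [card_univ, Fintype.card_fin] at h
    omega
  rw [h2, h1]

lemma pre_sum (η : ℝ) (l k : ℕ) (x : Fin k → ZMod 2) (F : ℕ → ℝ) :
    ∑ P : Matrix (Fin l) (Fin k) (ZMod 2), preProb η P * F (hammingNorm (P.mulVec x))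
      = ∑ t ∈ range (l + 1), (l.choose t : ℝ) *
          (F t * (((1 + (1 - 2 * η) ^ hammingNorm x) / 2) ^ (l - t) *
            ((1 - (1 - 2 * η) ^ hammingNorm x) / 2) ^ t)) := by
  rw [← sum_weight l (fun t => F t * (((1 + (1 - 2 * η) ^ hammingNorm x) / 2) ^ (l - t) *
            ((1 - (1 - 2 * η) ^ hammingNorm x) / 2) ^ t))]
  have h1 : ∀ P : Matrix (Fin l) (Fin k) (ZMod 2), preProb η P * F (hammingNorm (P.mulVec x))
      = ∑ z : Fin l → ZMod 2, F (hammingNorm z) * ∏ a, ((∏ b, if P a b = 1 then η else 1 - η) *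
          (if (∑ b, P a b * x b) = z a then (1 : ℝ) else 0)) := by
    intro P
    rw [Finset.sum_eq_single (P.mulVec x)]
    · rw [mul_comm]
      congr 1
      unfold preProb
      refine prod_congr rfl fun a _ => ?_
      rw [if_pos (by rfl), mul_one]
    · intro z _ hz
      obtain ⟨a, ha⟩ := Function.ne_iff.mp hz
      rw [prod_eq_zero (mem_univ a), mul_zero]
      rw [if_neg, mul_zero]
      exact fun h => ha h.symm
    · simp
  simp only [h1]
  rw [sum_comm]
  refine sum_congr rfl fun z _ => ?_
  rw [← mul_sum, ← prod_weight]
  congr 1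
  have := aux_prod_sum (fun (a : Fin l) (g : Fin k → ZMod 2) =>
    (∏ b, if g b = 1 then η else 1 - η) * (if (∑ b, g b * x b) = z a then (1 : ℝ) else 0))
  refine Eq.trans this ?_
  exact prod_congr rfl fun a _ => bern_ind η k x (z a)

lemma sum_split {n : ℕ} (T : Finset (Fin n)) (φ : ℕ → ℕ → ℝ) :
    ∑ S : Finset (Fin n), φ (S ∩ T).card (S \ T).card
      = ∑ a ∈ range (T.card + 1), ∑ b ∈ range (n - T.card + 1),
          (T.card.choose a : ℝ) * ((n - T.card).choose b : ℝ) * φ a b := by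
  have h1 : ∑ S : Finset (Fin n), φ (S ∩ T).card (S \ T).card
      = ∑ p ∈ T.powerset ×ˢ (Tᶜ).powerset, φ p.1.card p.2.card := by
    refine sum_nbij' (fun S => (S ∩ T, S \ T)) (fun p => p.1 ∪ p.2) ?_ ?_ ?_ ?_ ?_
    · intro S _
      simp only [mem_product, mem_powerset]
      refine ⟨inter_subset_right, fun a ha => ?_⟩
      simp only [mem_sdiff, mem_compl] at ha ⊢
      exact ha.2
    · intro p _; exact mem_univ _
    · intro S _
      ext a
      simp only [mem_union, mem_inter, mem_sdiff]; tauto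
    · rintro ⟨A, B⟩ h
      simp only [mem_product, mem_powerset] at h
      obtain ⟨hA, hB⟩ := h
      have hB' : ∀ a, a ∈ B → a ∉ T := fun a ha => mem_compl.mp (hB ha)
      ext a
      · have := @hA a
        have := hB' a
        simp only [mem_union, mem_inter]; tauto
      · have := @hA a
        have := hB' a
        simp only [mem_union, mem_sdiff]; tauto
    · intro S _; rfl
  rw [h1, sum_product]
  have h2 := Finset.sum_powerset_apply_card (x := T)
    (fun a => ∑ B ∈ (Tᶜ).powerset, φ a B.card)
  refine Eq.trans h2 ?_
  refine sum_congr rfl fun a _ => ?_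
  have h3 := Finset.sum_powerset_apply_card (x := Tᶜ) (fun b => φ a b)
  have hc : (Tᶜ).card = n - T.card := by rw [card_compl, Fintype.card_fin]
  rw [h3, hc, nsmul_eq_mul, mul_sum]
  refine sum_congr rfl fun b _ => ?_
  rw [nsmul_eq_mul]; ring

lemma sum_tri (n r : ℕ) (hr : r ≤ n) (φ : ℕ → ℕ → ℝ) :
    ∑ a ∈ range (r + 1), ∑ b ∈ range (n - r + 1),
          (r.choose a : ℝ) * ((n - r).choose b : ℝ) * φ a b
      = ∑ d ∈ range (n + 1), ∑ s ∈ range (d + 1),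
          (r.choose s : ℝ) * ((n - r).choose (d - s) : ℝ) * φ s (d - s) := by
  rw [← sum_product', sum_sigma']
  refine sum_bij_ne_zero (fun p _ _ => ⟨p.1 + p.2, p.1⟩) ?_ ?_ ?_ ?_
  · rintro ⟨a, b⟩ h _
    simp only [mem_product, mem_range, mem_sigma] at h ⊢
    omega
  · rintro ⟨a, b⟩ _ _ ⟨a', b'⟩ _ _ h
    simp only [Sigma.mk.injEq, heq_eq_eq] at h
    ext <;> simp <;> omega
  · rintro ⟨d, s⟩ h hne
    simp only [mem_sigma, mem_range] at h
    have h1 : s ≤ r := by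
      by_contra hc
      exact hne (by simp [Nat.choose_eq_zero_of_lt (not_le.mp hc)])
    have h2 : d - s ≤ n - r := by
      by_contra hc
      exact hne (by simp [Nat.choose_eq_zero_of_lt (not_le.mp hc)])
    refine ⟨(s, d - s), ?_, hne, ?_⟩
    · simp only [mem_product, mem_range]; omega
    · have : s + (d - s) = d := by omega
      simp [this]
  · rintro ⟨a, b⟩ _ _
    simp

lemma dot_supp {n : ℕ} (g y : Fin n → ZMod 2) :
    ∑ b, g b * y b = (((suppEquiv n g) ∩ (suppEquiv n y)).card : ZMod 2) := by
  have h : ∀ u v : ZMod 2, u * v = if (u ≠ 0 ∧ v ≠ 0) then 1 else 0 := by decide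
  simp only [h]
  rw [sum_boole]
  congr 2
  ext a
  simp [suppEquiv]

lemma row_J (n : ℕ) (Ω : ℕ → ℝ) (y : Fin n → ZMod 2) :
    ∑ g : Fin n → ZMod 2, ltRowProb n Ω g * (if (∑ b, g b * y b) = 0 then (1 : ℝ) else 0)
      = J n Ω (hammingNorm y) := by
  set T := suppEquiv n y with hT
  set φ : ℕ → ℕ → ℝ := fun a b => if Even a then
    (if a + b = 0 then 0 else Ω (a + b) / (n.choose (a + b) : ℝ)) else 0 with hφ
  have h1 : ∀ g : Fin n → ZMod 2,
      ltRowProb n Ω g * (if (∑ b, g b * y b) = 0 then (1 : ℝ) else 0)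
      = (fun S : Finset (Fin n) => φ (S ∩ T).card (S \ T).card) (suppEquiv n g) := by
    intro g
    have hc : (suppEquiv n g ∩ T).card + (suppEquiv n g \ T).card = hammingNorm g := by
      rw [hammingNorm_supp, card_inter_add_card_sdiff]
    simp only [hφ, hc, dot_supp, ZMod.natCast_eq_zero_iff_even, ltRowProb, ← hT]
    by_cases he : Even (suppEquiv n g ∩ T).card <;> simp [he]
  simp only [h1]
  rw [Equiv.sum_comp (suppEquiv n) (fun S : Finset (Fin n) => φ (S ∩ T).card (S \ T).card),
    sum_split, sum_tri n T.card (by simpa using card_le_univ T)]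
  unfold J
  rw [hammingNorm_supp, ← hT, sum_range_succ']
  have h0 : ∑ s ∈ range (0 + 1), (T.card.choose s : ℝ) * ((n - T.card).choose (0 - s) : ℝ)
      * φ s (0 - s) = 0 := by simp [hφ]
  have hs := Finset.sum_Ico_add' (fun d => ∑ s ∈ range (d + 1),
    (T.card.choose s : ℝ) * ((n - T.card).choose (d - s) : ℝ) * φ s (d - s)) 0 n 1
  rw [h0, add_zero, Finset.range_eq_Ico]
  refine Eq.trans hs ?_
  refine sum_congr (by ext; simp) fun d hd => ?_
  rw [mem_Icc] at hd
  rw [mul_div_assoc, mul_comm, sum_div, sum_mul, sum_filter]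
  refine sum_congr rfl fun s hs => ?_
  have : s + (d - s) = d := by rw [mem_range] at hs; omega
  simp only [hφ, this]
  rw [if_neg (by omega : ¬ d = 0)]
  split_ifs
  · ring
  · ring

lemma ltRow_total (n : ℕ) (Ω : ℕ → ℝ) (hΩsum : ∑ d ∈ Finset.Icc 1 n, Ω d = 1) :
    ∑ g : Fin n → ZMod 2, ltRowProb n Ω g = 1 := by
  have h := sum_weight n (fun d => if d = 0 then 0 else Ω d / (n.choose d : ℝ))
  refine Eq.trans h ?_
  rw [← hΩsum]
  symm
  refine sum_subset_zero_on_sdiff (fun d hd => ?_) (fun d hd => ?_) (fun d hd => ?_)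
  · simp at hd ⊢; omega
  · have : d = 0 := by simp at hd; omega
    simp [this]
  · rw [mem_Icc] at hd
    have : (n.choose d : ℝ) ≠ 0 := by exact_mod_cast (Nat.choose_pos hd.2).ne'
    rw [if_neg (by omega)]
    field_simp

lemma lt_total (n m : ℕ) (Ω : ℕ → ℝ) (hΩsum : ∑ d ∈ Finset.Icc 1 n, Ω d = 1) :
    ∑ G : Matrix (Fin m) (Fin n) (ZMod 2), ltProb n Ω G = 1 := by
  have := aux_prod_sum (fun (_ : Fin m) (g : Fin n → ZMod 2) => ltRowProb n Ω g)
  refine Eq.trans this ?_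
  simp [ltRow_total n Ω hΩsum]

lemma pre_total (l k : ℕ) (η : ℝ) :
    ∑ P : Matrix (Fin l) (Fin k) (ZMod 2), preProb η P = 1 := by
  have := aux_prod_sum (fun (_ : Fin l) (g : Fin k → ZMod 2) => ∏ b, if g b = 1 then η else 1 - η)
  refine Eq.trans this ?_
  simp [bern_total]

lemma lt_J (n m : ℕ) (Ω : ℕ → ℝ) (y : Fin n → ZMod 2) :
    ∑ G : Matrix (Fin m) (Fin n) (ZMod 2), ltProb n Ω G * (if G.mulVec y = 0 then (1 : ℝ) else 0)
      = J n Ω (hammingNorm y) ^ m := by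
  have h := aux_prod_sum (fun (_ : Fin m) (g : Fin n → ZMod 2) =>
    ltRowProb n Ω g * (if (∑ b, g b * y b) = 0 then (1 : ℝ) else 0))
  simp only [row_J, prod_const, card_univ, Fintype.card_fin] at h
  rw [← h]
  refine sum_congr rfl fun G _ => ?_
  rw [prod_mul_distrib]
  congr 1
  by_cases hG : G.mulVec y = 0
  · rw [if_pos hG]
    exact (prod_eq_one (fun a _ => if_pos (congrFun hG a))).symm
  · rw [if_neg hG]
    obtain ⟨a, ha⟩ := Function.ne_iff.mp hG
    exact (prod_eq_zero (mem_univ a) (if_neg ha)).symm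

lemma pre_nonneg {l k : ℕ} (η : ℝ) (hη0 : 0 ≤ η) (hη1 : η ≤ 1)
    (P : Matrix (Fin l) (Fin k) (ZMod 2)) : 0 ≤ preProb η P := by
  refine prod_nonneg fun a _ => prod_nonneg fun b _ => ?_
  split_ifs <;> linarith

lemma lt_nonneg {n m : ℕ} (Ω : ℕ → ℝ) (hΩpos : ∀ d ∈ Finset.Icc 1 n, 0 ≤ Ω d)
    (G : Matrix (Fin m) (Fin n) (ZMod 2)) : 0 ≤ ltProb n Ω G := by
  refine prod_nonneg fun a _ => ?_
  unfold ltRowProb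
  split_ifs with h
  · exact le_rfl
  · refine div_nonneg (hΩpos _ ?_) (Nat.cast_nonneg _)
    have : hammingNorm (G a) ≤ n := by simpa using hammingNorm_le_card_fintype (x := G a)
    rw [mem_Icc]; omega

lemma wt_Gpre {n k : ℕ} (hkn : k ≤ n) (P : Matrix (Fin (n - k)) (Fin k) (ZMod 2))
    (x : Fin k → ZMod 2) :
    hammingNorm ((Gpre hkn P).mulVec x) = hammingNorm x + hammingNorm (P.mulVec x) := by
  obtain ⟨l, rfl⟩ : ∃ l, n = k + l := ⟨n - k, by omega⟩
  have hl : k + l - k = l := by omega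
  have key : ∀ {N : ℕ} (z : Fin N → ZMod 2), hammingNorm z = ∑ a, if z a ≠ 0 then 1 else 0 := by
    intro N z
    rw [sum_boole]; rfl
  rw [key, key, key, Fin.sum_univ_add]
  congr 1
  · refine sum_congr rfl fun a _ => ?_
    have : (Gpre hkn P).mulVec x (Fin.castAdd l a) = x a := by
      simp [Matrix.mulVec, dotProduct, Gpre, Fin.val_inj]
    rw [this]
  · rw [← Equiv.sum_comp (finCongr hl.symm)]
    refine sum_congr rfl fun a _ => ?_
    have : (Gpre hkn P).mulVec x (Fin.natAdd k a) = P.mulVec x (finCongr hl.symm a) := by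
      simp only [Matrix.mulVec, dotProduct, Gpre, Matrix.of_apply, Fin.val_natAdd]
      refine sum_congr rfl fun b _ => ?_
      rw [dif_neg (by omega)]
      congr 2
      ext
      simp
    rw [this]

lemma rank_of_ker {m k : ℕ} (M : Matrix (Fin m) (Fin k) (ZMod 2))
    (h : ∀ x, M.mulVec x = 0 → x = 0) : M.rank = k := by
  have : Function.Injective M.mulVecLin := by
    rw [injective_iff_map_eq_zero]
    exact fun x hx => h x hx
  rw [Matrix.rank, LinearMap.finrank_range_of_inj this]
  simp

lemma ind_bound {m k : ℕ} (M : Matrix (Fin m) (Fin k) (ZMod 2)) :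
    1 - ∑ x : Fin k → ZMod 2, (if x = 0 then (0 : ℝ) else if M.mulVec x = 0 then 1 else 0)
      ≤ if M.rank = k then 1 else 0 := by
  have hnn : ∀ x ∈ (univ : Finset (Fin k → ZMod 2)),
      (0 : ℝ) ≤ (if x = 0 then (0 : ℝ) else if M.mulVec x = 0 then 1 else 0) := by
    intro x _; split_ifs <;> norm_num
  by_cases h : ∀ x, M.mulVec x = 0 → x = 0
  · rw [if_pos (rank_of_ker M h)]
    linarith [sum_nonneg hnn]
  · push Not at h
    obtain ⟨x, hx, hx0⟩ := h
    have := single_le_sum hnn (mem_univ x)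
    rw [if_neg hx0, if_pos hx] at this
    split_ifs <;> linarith

lemma x_term (n k m : ℕ) (η : ℝ) (Ω : ℕ → ℝ) (hkn : k ≤ n) (x : Fin k → ZMod 2) :
    ∑ P : Matrix (Fin (n - k)) (Fin k) (ZMod 2), ∑ G : Matrix (Fin m) (Fin n) (ZMod 2),
      preProb η P * ltProb n Ω G * (if (G * Gpre hkn P).mulVec x = 0 then (1 : ℝ) else 0)
    = ∑ r ∈ Finset.Icc (hammingNorm x) (n - k + hammingNorm x),
        (J n Ω r) ^ m * D n k η (hammingNorm x) r := by
  have h1 : ∀ P : Matrix (Fin (n - k)) (Fin k) (ZMod 2),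
      ∑ G : Matrix (Fin m) (Fin n) (ZMod 2),
      preProb η P * ltProb n Ω G * (if (G * Gpre hkn P).mulVec x = 0 then (1 : ℝ) else 0)
      = preProb η P * (fun t => J n Ω (hammingNorm x + t) ^ m) (hammingNorm (P.mulVec x)) := by
    intro P
    simp only [← Matrix.mulVec_mulVec, mul_assoc]
    rw [← mul_sum, lt_J, wt_Gpre]
  rw [sum_congr rfl fun P _ => h1 P, pre_sum η (n - k) k x (fun t => J n Ω (hammingNorm x + t) ^ m)]
  refine sum_nbij' (fun t => hammingNorm x + t) (fun r => r - hammingNorm x) ?_ ?_ ?_ ?_ ?_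
  · intro t ht; simp at ht ⊢; omega
  · intro t ht; simp at ht ⊢; omega
  · intro t ht; simp
  · intro t ht; simp at ht ⊢; omega
  · intro t ht
    simp only [D, Nat.add_sub_cancel_left]
    ring

/-- Theorem 1, lower bound on the decoding success probability of Raptor
codes under ML decoding: the probability that the `m × k` product matrix
`G_LT * G_pre` over GF(2) has rank `k` is at least
`1 − ∑_{i=1}^{k} C(k,i) ∑_{r=i}^{n−k+i} (J(r))^m D(i,r)`. -/
theorem raptor_ml_decoding_success_lower_bound
    (n k m : ℕ) (η : ℝ) (Ω : ℕ → ℝ)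
    (hk : 1 ≤ k) (hkn : k ≤ n) (hm : k ≤ m)
    (hη0 : 0 ≤ η) (hη1 : η ≤ 1)
    (hΩpos : ∀ d ∈ Finset.Icc 1 n, 0 ≤ Ω d)
    (hΩsum : ∑ d ∈ Finset.Icc 1 n, Ω d = 1) :
    1 - ∑ i ∈ Finset.Icc 1 k, (k.choose i : ℝ) *
          ∑ r ∈ Finset.Icc i (n - k + i), (J n Ω r) ^ m * D n k η i r
      ≤ ∑ P : Matrix (Fin (n - k)) (Fin k) (ZMod 2),
          ∑ G : Matrix (Fin m) (Fin n) (ZMod 2),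
            if (G * Gpre hkn P).rank = k then preProb η P * ltProb n Ω G else 0 := by
  set A : ℕ → ℝ := fun i => ∑ r ∈ Finset.Icc i (n - k + i), (J n Ω r) ^ m * D n k η i r with hA
  have hsum : ∑ i ∈ Finset.Icc 1 k, (k.choose i : ℝ) * A i
      = ∑ x : Fin k → ZMod 2, if x = 0 then 0 else A (hammingNorm x) := by
    have h := sum_weight k (fun i => if i = 0 then 0 else A i)
    simp only [hammingNorm_eq_zero] at h
    rw [h]
    refine sum_subset_zero_on_sdiff (fun d hd => ?_) (fun d hd => ?_) (fun d hd => ?_)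
    · simp at hd ⊢; omega
    · have : d = 0 := by simp at hd; omega
      simp [this]
    · rw [mem_Icc] at hd
      rw [if_neg (by omega)]
  have hone : ∑ P : Matrix (Fin (n - k)) (Fin k) (ZMod 2),
      ∑ G : Matrix (Fin m) (Fin n) (ZMod 2), preProb η P * ltProb n Ω G = 1 := by
    simp only [← mul_sum, lt_total n m Ω hΩsum, mul_one, pre_total]
  have hx : ∑ x : Fin k → ZMod 2, (if x = 0 then 0 else A (hammingNorm x))
      = ∑ P : Matrix (Fin (n - k)) (Fin k) (ZMod 2), ∑ G : Matrix (Fin m) (Fin n) (ZMod 2),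
        preProb η P * ltProb n Ω G * ∑ x : Fin k → ZMod 2,
          (if x = 0 then (0 : ℝ) else if (G * Gpre hkn P).mulVec x = 0 then 1 else 0) := by
    simp only [mul_sum]
    rw [sum_congr rfl fun P _ => sum_comm, sum_comm]
    refine sum_congr rfl fun x _ => ?_
    by_cases h0 : x = 0
    · simp [h0]
    · simp only [if_neg h0]
      exact (x_term n k m η Ω hkn x).symm
  change 1 - ∑ i ∈ Finset.Icc 1 k, (k.choose i : ℝ) * A i ≤ _
  rw [hsum, hx]
  refine (sub_left_inj.mpr hone.symm).le.trans ?_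
  rw [← sum_sub_distrib]
  refine sum_le_sum fun P _ => ?_
  rw [← sum_sub_distrib]
  refine sum_le_sum fun G _ => ?_
  have hw : 0 ≤ preProb η P * ltProb n Ω G :=
    mul_nonneg (pre_nonneg η hη0 hη1 P) (lt_nonneg Ω hΩpos G)
  have := mul_le_mul_of_nonneg_left (ind_bound (G * Gpre hkn P)) hw
  rw [mul_sub, mul_one, mul_ite, mul_one, mul_zero] at this
  exact this
end
end

section
/- Let 1 ≤ k ≤ n and m ≥ 1. Over GF(2), let P be an arbitrary (n−k)×k matrix, let G_pre = [I_k ; P] be the n×k matrix whose top block is the k×k identity and whose bottom block is P, and let H = [P | I_{n−k}] be the (n−k)×n matrix whose left block is P and whose right block is the (n−k)×(n−k) identity. Then for every m×n matrix G_LT over GF(2), the (m+n−k)×n matrix obtained by stacking G_LT on top of H has rank n if and only if the m×k matrix G_LT·G_pre has rank k. -/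
open Finset

noncomputable section

/-- The parity-check matrix `H = [P | I_{n−k}]` (`P` on the left of the identity). -/
def Hmat {n k : ℕ} (hkn : k ≤ n) (P : Matrix (Fin (n - k)) (Fin k) (ZMod 2)) :
    Matrix (Fin (n - k)) (Fin n) (ZMod 2) :=
  Matrix.of fun a b =>
    if hb : (b : ℕ) < k then P a ⟨(b : ℕ), hb⟩
    else if (b : ℕ) - k = (a : ℕ) then 1 else 0

theorem aux_rank_iff {ι : Type*} [Fintype ι] {n : ℕ} (A : Matrix ι (Fin n) (ZMod 2)) :
    A.rank = n ↔ ∀ v, A.mulVec v = 0 → v = 0 := by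
  have h := LinearMap.finrank_range_add_finrank_ker A.mulVecLin
  have hr : A.rank = Module.finrank (ZMod 2) (LinearMap.range A.mulVecLin) := rfl
  rw [← hr, Module.finrank_fin_fun] at h
  have h2 : A.rank = n ↔ LinearMap.ker A.mulVecLin = ⊥ := by
    rw [← Submodule.finrank_eq_zero (R := ZMod 2)]
    omega
  rw [h2, LinearMap.ker_eq_bot']
  rfl

theorem aux_Gpre_lt {n k : ℕ} (hkn : k ≤ n) (P : Matrix (Fin (n - k)) (Fin k) (ZMod 2))
    (u : Fin k → ZMod 2) (a : Fin n) (ha : (a : ℕ) < k) :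
    (Gpre hkn P).mulVec u a = u ⟨a, ha⟩ := by
  simp only [Matrix.mulVec, dotProduct, Gpre, Matrix.of_apply, ha, dite_true]
  rw [Finset.sum_eq_single ⟨a, ha⟩]
  · simp
  · intro b _ hb
    rw [if_neg, zero_mul]
    intro h
    exact hb (Fin.ext h.symm)
  · simp

theorem aux_Gpre_ge {n k : ℕ} (hkn : k ≤ n) (P : Matrix (Fin (n - k)) (Fin k) (ZMod 2))
    (u : Fin k → ZMod 2) (a : Fin (n - k)) (h : k + (a : ℕ) < n) :
    (Gpre hkn P).mulVec u ⟨k + a, h⟩ = ∑ b, P a b * u b := by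
  simp [Matrix.mulVec, dotProduct, Gpre]

theorem aux_H {n k : ℕ} (hkn : k ≤ n) (P : Matrix (Fin (n - k)) (Fin k) (ZMod 2))
    (v : Fin n → ZMod 2) (a : Fin (n - k)) (h : k + (a : ℕ) < n) :
    (Hmat hkn P).mulVec v a = (∑ b, P a b * v (Fin.castLE hkn b)) + v ⟨k + a, h⟩ := by
  have e : k + (n - k) = n := by omega
  simp only [Matrix.mulVec, dotProduct]
  rw [← Equiv.sum_comp (finCongr e), Fin.sum_univ_add]
  congr 1
  · refine Finset.sum_congr rfl fun b _ => ?_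
    simp [Hmat]
    left
    rfl
  · rw [Finset.sum_eq_single a]
    · simp [Hmat]
      rfl
    · intro b _ hb
      have : (b : ℕ) ≠ a := fun h => hb (Fin.ext h)
      simp [Hmat, this]
    · simp

/-- Lemma 1: for every `m × n` matrix `G_LT` over GF(2), the
`(m+n−k) × n` matrix obtained by stacking `G_LT` on top of `H` has rank `n` if and
only if the `m × k` matrix `G_LT * G_pre` has rank `k`. -/
theorem stack_full_rank_iff_product_full_rank
    (n k m : ℕ) (hk : 1 ≤ k) (hkn : k ≤ n) (hm : 1 ≤ m)
    (P : Matrix (Fin (n - k)) (Fin k) (ZMod 2))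
    (G : Matrix (Fin m) (Fin n) (ZMod 2)) :
    (Matrix.fromRows G (Hmat hkn P)).rank = n ↔ (G * Gpre hkn P).rank = k := by
  have hlt : ∀ a : Fin (n - k), k + (a : ℕ) < n := fun a => by have := a.isLt; omega
  have hcast : ∀ (u : Fin k → ZMod 2) (b : Fin k),
      (Gpre hkn P).mulVec u (Fin.castLE hkn b) = u b := fun u b =>
    aux_Gpre_lt hkn P u (Fin.castLE hkn b) b.isLt
  rw [aux_rank_iff, aux_rank_iff]
  constructor
  · intro H u hu
    have h0 : (Gpre hkn P).mulVec u = 0 := by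
      apply H
      rw [Matrix.fromRows_mulVec, Matrix.mulVec_mulVec, hu]
      have : (Hmat hkn P).mulVec ((Gpre hkn P).mulVec u) = 0 := by
        funext a
        rw [aux_H hkn P _ a (hlt a), aux_Gpre_ge]
        simp only [hcast]
        exact CharTwo.add_self_eq_zero _
      rw [this]
      funext x
      rcases x with x | x <;> rfl
    funext b
    rw [← hcast u b, h0]
    rfl
  · intro H v hv
    rw [Matrix.fromRows_mulVec] at hv
    have hG : G.mulVec v = 0 := funext fun i => congrFun hv (Sum.inl i)
    have hH : (Hmat hkn P).mulVec v = 0 := funext fun i => congrFun hv (Sum.inr i)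
    have hvv : v = (Gpre hkn P).mulVec (fun b => v (Fin.castLE hkn b)) := by
      funext a
      by_cases ha : (a : ℕ) < k
      · rw [aux_Gpre_lt hkn P _ a ha]
        rfl
      · obtain ⟨c, rfl⟩ : ∃ c : Fin (n - k), a = ⟨k + c, hlt c⟩ :=
          ⟨⟨a - k, by have := a.isLt; omega⟩, Fin.ext (by simp; omega)⟩
        rw [aux_Gpre_ge]
        have := congrFun hH c
        rw [aux_H hkn P _ c (hlt c)] at this
        exact (CharTwo.add_eq_zero.mp this).symm
    have h0 := H (fun b => v (Fin.castLE hkn b)) (by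
      rw [← Matrix.mulVec_mulVec, ← hvv, hG])
    rw [hvv, h0, Matrix.mulVec_zero]
end
end

section
/- Let 1 ≤ k ≤ n and m ≥ 1. Let B be any fixed n×k matrix over GF(2) with rank(B) = k, and let G be a random m×n matrix over GF(2) whose rows are i.i.d. and uniformly distributed over the 2^n − 1 nonzero vectors of GF(2)^n. Then the probability that the m×k product matrix G·B has rank k is at least 1 − (2^k − 1) · ((2^{n−1} − 1)/(2^n − 1))^m. -/
open Finset

noncomputable section

/-- Probability of a particular `m × n` matrix over GF(2) whose rows are i.i.d. and
uniform over the `2^n − 1` nonzero vectors of `GF(2)^n`. -/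
def unifNZProb (n : ℕ) {m : ℕ} (G : Matrix (Fin m) (Fin n) (ZMod 2)) : ℝ :=
  ∏ i : Fin m, if G i = 0 then 0 else 1 / ((2 : ℝ) ^ n - 1)

theorem aux_rank_inj {a k : ℕ} (A : Matrix (Fin a) (Fin k) (ZMod 2)) :
    A.rank = k ↔ ∀ v, A.mulVec v = 0 → v = 0 := by
  have h1 := LinearMap.finrank_range_add_finrank_ker A.mulVecLin
  rw [Module.finrank_fin_fun] at h1
  have h2 : A.rank = Module.finrank (ZMod 2) (LinearMap.range A.mulVecLin) := rfl
  have h3 : (∀ v, A.mulVec v = 0 → v = 0) ↔ LinearMap.ker A.mulVecLin = ⊥ := by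
    rw [LinearMap.ker_eq_bot']
    rfl
  rw [h3, ← Submodule.finrank_eq_zero (R := ZMod 2)]
  omega

theorem aux_card {n : ℕ} (hn : 1 ≤ n) (w : Fin n → ZMod 2) (hw : w ≠ 0) :
    (univ.filter (fun g : Fin n → ZMod 2 => g ⬝ᵥ w = 0)).card = 2 ^ (n - 1) := by
  obtain ⟨j, hj⟩ : ∃ j, w j ≠ 0 := by
    by_contra h
    push Not at h
    exact hw (funext h)
  have hj1 : w j = 1 := by
    have : ∀ x : ZMod 2, x ≠ 0 → x = 1 := by decide
    exact this _ hj
  have d0 : ∀ x : ZMod 2, x = 0 → ¬ (x + 1 = 0) := by decide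
  have d1 : ∀ x : ZMod 2, ¬ (x = 0) → x + 1 = 0 := by decide
  have e : ∀ g : Fin n → ZMod 2, (g + Pi.single j 1) ⬝ᵥ w = g ⬝ᵥ w + 1 := by
    intro g
    rw [add_dotProduct, single_dotProduct, hj1, one_mul]
  have ee : ∀ g : Fin n → ZMod 2, g + Pi.single j 1 + Pi.single j 1 = g := by
    intro g
    funext i
    simp only [Pi.add_apply]
    rw [add_assoc, CharTwo.add_self_eq_zero, add_zero]
  have hc : (univ.filter (fun g : Fin n → ZMod 2 => g ⬝ᵥ w = 0)).card
      = (univ.filter (fun g : Fin n → ZMod 2 => ¬ (g ⬝ᵥ w = 0))).card := by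
    refine Finset.card_nbij' (fun g => g + Pi.single j 1) (fun g => g + Pi.single j 1) ?_ ?_ ?_ ?_
    · intro g hg
      simp only [coe_filter, mem_univ, true_and, Set.mem_ofPred_eq] at hg ⊢
      rw [e]; exact d0 _ hg
    · intro g hg
      simp only [coe_filter, mem_univ, true_and, Set.mem_ofPred_eq] at hg ⊢
      rw [e]; exact d1 _ hg
    · intro g _
      exact ee g
    · intro g _
      exact ee g
  have ht := Finset.card_filter_add_card_filter_not (s := univ)
    (fun g : Fin n → ZMod 2 => g ⬝ᵥ w = 0)
  rw [← hc, Finset.card_univ, Fintype.card_fun, ZMod.card, Fintype.card_fin] at ht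
  obtain ⟨l, rfl⟩ : ∃ l, n = l + 1 := ⟨n - 1, by omega⟩
  rw [pow_succ] at ht
  rw [Nat.add_sub_cancel]
  omega

theorem aux_row {n : ℕ} (P : (Fin n → ZMod 2) → Prop) [DecidablePred P] (h0 : P 0) (c : ℝ) :
    ∑ g : Fin n → ZMod 2, (if P g then (if g = 0 then 0 else c) else 0)
      = ((univ.filter P).card - 1) * c := by
  have h : ∀ g : Fin n → ZMod 2, (if P g then (if g = 0 then 0 else c) else 0)
      = (if P g then c else 0) - (if g = 0 then c else 0) := by
    intro g
    by_cases hg : g = 0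
    · subst hg; simp [h0]
    · simp [hg]
  rw [Finset.sum_congr rfl (fun g _ => h g), Finset.sum_sub_distrib, ← Finset.sum_filter,
    Finset.sum_const]
  simp
  ring

theorem aux_mat {n m : ℕ} (P : (Fin n → ZMod 2) → Prop) [DecidablePred P]
    [∀ G : Matrix (Fin m) (Fin n) (ZMod 2), Decidable (∀ i, P (G i))] (h0 : P 0) :
    ∑ G : Matrix (Fin m) (Fin n) (ZMod 2), (if ∀ i, P (G i) then unifNZProb n G else 0)
      = (((univ.filter P).card - 1) / ((2 : ℝ) ^ n - 1)) ^ m := by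
  have h := aux_row P h0 (1 / ((2 : ℝ) ^ n - 1))
  rw [mul_one_div] at h
  rw [← h, Fintype.sum_pow]
  refine Finset.sum_congr rfl (fun G _ => ?_)
  unfold unifNZProb
  by_cases hG : ∀ i, P (G i)
  · rw [if_pos hG]
    exact Finset.prod_congr rfl (fun i _ => (if_pos (hG i)).symm)
  · rw [if_neg hG]
    push Not at hG
    obtain ⟨i, hi⟩ := hG
    exact (Finset.prod_eq_zero (mem_univ i) (if_neg hi)).symm

theorem aux_nonneg {n m : ℕ} (G : Matrix (Fin m) (Fin n) (ZMod 2)) : 0 ≤ unifNZProb n G := by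
  unfold unifNZProb
  refine Finset.prod_nonneg (fun i _ => ?_)
  have : (1 : ℝ) ≤ 2 ^ n := one_le_pow₀ (by norm_num)
  split_ifs
  · exact le_rfl
  · exact one_div_nonneg.mpr (by linarith)

/-- for any fixed `n × k` matrix `B` over GF(2) with `rank B = k` and a
random `m × n` matrix `G` whose rows are i.i.d. uniform over the nonzero vectors of
`GF(2)^n`, the probability that `G * B` has rank `k` is at least
`1 − (2^k − 1) ((2^{n−1} − 1)/(2^n − 1))^m`. -/
theorem uniform_rows_product_full_rank_lower_bound
    (n k m : ℕ) (hk : 1 ≤ k) (hkn : k ≤ n) (hm : 1 ≤ m)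
    (B : Matrix (Fin n) (Fin k) (ZMod 2)) (hB : B.rank = k) :
    1 - ((2 : ℝ) ^ k - 1) * (((2 : ℝ) ^ (n - 1) - 1) / ((2 : ℝ) ^ n - 1)) ^ m
      ≤ ∑ G : Matrix (Fin m) (Fin n) (ZMod 2),
          if (G * B).rank = k then unifNZProb n G else 0 := by
  have hn : 1 ≤ n := hk.trans hkn
  have hBi := (aux_rank_inj B).1 hB
  have hpos : (2 : ℝ) ^ n - 1 ≠ 0 := by
    have : (1 : ℝ) < 2 ^ n := one_lt_pow₀ (by norm_num) (by omega)
    linarith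
  have htot : ∑ G : Matrix (Fin m) (Fin n) (ZMod 2), unifNZProb n G = 1 := by
    have h := aux_mat (n := n) (m := m) (fun _ => True) trivial
    simp only [implies_true, if_true, Finset.filter_true, Finset.card_univ, Fintype.card_fun,
      ZMod.card, Fintype.card_fin] at h
    rw [h]
    push_cast
    rw [div_self hpos, one_pow]
  have hv : ∀ v ∈ univ.erase (0 : Fin k → ZMod 2),
      ∑ G : Matrix (Fin m) (Fin n) (ZMod 2),
        (if ∀ i, G i ⬝ᵥ B.mulVec v = 0 then unifNZProb n G else 0)
      = (((2 : ℝ) ^ (n - 1) - 1) / ((2 : ℝ) ^ n - 1)) ^ m := by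
    intro v hv
    have hw : B.mulVec v ≠ 0 := fun h => (Finset.mem_erase.1 hv).1 (hBi v h)
    have h := aux_mat (n := n) (m := m) (fun g => g ⬝ᵥ B.mulVec v = 0) (zero_dotProduct _)
    rw [h, aux_card hn _ hw]
    push_cast
    rfl
  have hsum := Finset.sum_congr rfl hv
  rw [Finset.sum_const, Finset.card_erase_of_mem (mem_univ _), Finset.card_univ, Fintype.card_fun,
    ZMod.card, Fintype.card_fin, nsmul_eq_mul, Nat.cast_sub Nat.one_le_two_pow, Finset.sum_comm]
    at hsum
  push_cast at hsum
  rw [← hsum, ← htot, sub_le_iff_le_add, ← Finset.sum_add_distrib]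
  refine Finset.sum_le_sum (fun G _ => ?_)
  have hG := aux_nonneg G
  have hnn : ∀ v ∈ univ.erase (0 : Fin k → ZMod 2),
      0 ≤ (if ∀ i, G i ⬝ᵥ B.mulVec v = 0 then unifNZProb n G else 0) := by
    intro v _
    split_ifs
    · exact hG
    · exact le_rfl
  by_cases hr : (G * B).rank = k
  · rw [if_pos hr]
    linarith [Finset.sum_nonneg hnn]
  · rw [if_neg hr, zero_add]
    rw [aux_rank_inj] at hr
    push Not at hr
    obtain ⟨v, hv0, hvne⟩ := hr
    have hz : ∀ i, G i ⬝ᵥ B.mulVec v = 0 := by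
      intro i
      rw [← Matrix.mulVec_mulVec] at hv0
      exact congrFun hv0 i
    refine le_trans (le_of_eq ?_)
      (Finset.single_le_sum hnn (Finset.mem_erase.2 ⟨hvne, mem_univ v⟩))
    rw [if_pos hz]
end
end
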